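/- Define Γ(t) = ∫₀^t γ(s) ds and h(t) = e^{Γ(t)} ∫_t^∞ e^{−Γ(s)} ds for t ≥ 0. Then h(t) is asymptotically equivalent to 1/γ(t) as t → +∞, i.e. γ(t)·h(t) → 1 as t → +∞. -/

import Mathlib

open MeasureTheory Filter Real Set RealInnerProductSpace

lemma aux_G (c α : ℝ) (hα1 : α < 1) (t : ℝ) (ht : 0 ≤ t) :
    ∫ s in (0:ℝ)..t, c / (1 + s) ^ α = c / (1 - α) * ((1 + t) ^ (1 - α) - 1) := by
  have h1 : (1 - α) ≠ 0 := by linarith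
  have hd : ∀ s ∈ uIcc 0 t, HasDerivAt (fun s : ℝ => c / (1 - α) * ((1 + s) ^ (1 - α) - 1))
      (c / (1 + s) ^ α) s := by
    intro s hs
    rw [uIcc_of_le ht] at hs
    have hp : (0:ℝ) < 1 + s := by linarith [hs.1]
    have := ((((hasDerivAt_id s).const_add 1).rpow_const (p := 1 - α)
      (Or.inl hp.ne')).sub_const 1).const_mul (c / (1 - α))
    refine this.congr_deriv ?_
    have e : (1 - α - 1) = -α := by ring
    simp only [id, e, rpow_neg hp.le]
    field_simp
  rw [intervalIntegral.integral_eq_sub_of_hasDerivAt hd]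
  · simp
  · apply ContinuousOn.intervalIntegrable
    intro s hs
    rw [uIcc_of_le ht] at hs
    have hp : (0:ℝ) < 1 + s := by linarith [hs.1]
    apply ContinuousAt.continuousWithinAt
    apply ContinuousAt.div continuousAt_const
    · exact ContinuousAt.rpow_const (by fun_prop) (Or.inl hp.ne')
    · exact (rpow_pos_of_pos hp _).ne'

lemma aux_F (c α : ℝ) (hc : 0 < c) (hα1 : α < 1) :
    Tendsto (fun s : ℝ => -(exp (-(c / (1 - α) * ((1 + s) ^ (1 - α) - 1))) * (1 + s) ^ α / c))
      atTop (nhds 0) := by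
  have h1 : 0 < (1 - α) := by linarith
  have hk : 0 < c / (1 - α) := by positivity
  have hx : Tendsto (fun s : ℝ => (1 + s) ^ (1 - α)) atTop atTop :=
    (tendsto_rpow_atTop h1).comp (tendsto_atTop_add_const_left _ 1 tendsto_id)
  have := ((tendsto_rpow_mul_exp_neg_mul_atTop_nhds_zero (α / (1 - α)) _ hk).comp hx).const_mul
    (-(exp (c / (1 - α)) / c))
  rw [mul_zero] at this
  refine this.congr' ?_
  filter_upwards [eventually_ge_atTop 0] with s hs
  have hp : (0:ℝ) < 1 + s := by linarith
  simp only [Function.comp]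
  rw [← rpow_mul hp.le, mul_div_cancel₀ _ h1.ne',
    show -(c / (1 - α) * ((1 + s) ^ (1 - α) - 1))
      = c / (1 - α) + -(c / (1 - α)) * (1 + s) ^ (1 - α) by ring, exp_add]
  ring

lemma aux_dF (c α : ℝ) (hc : 0 < c) (hα1 : α < 1) (s : ℝ) (hs : 0 ≤ s) :
    HasDerivAt (fun s : ℝ => -(exp (-(c / (1 - α) * ((1 + s) ^ (1 - α) - 1))) * (1 + s) ^ α / c))
      (exp (-(c / (1 - α) * ((1 + s) ^ (1 - α) - 1))) * (1 - α / c * (1 + s) ^ (α - 1))) s := by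
  have h1 : (1 - α) ≠ 0 := by linarith
  have hp : (0:ℝ) < 1 + s := by linarith
  have hb := (hasDerivAt_id s).const_add 1
  have hG := ((((hb.rpow_const (p := 1 - α)
      (Or.inl hp.ne')).sub_const 1).const_mul (c / (1 - α))).neg).exp
  have := ((hG.mul (hb.rpow_const (p := α) (Or.inl hp.ne'))).div_const c).neg
  refine this.congr_deriv ?_
  have e : (1 - α - 1) = -α := by ring
  have := (rpow_pos_of_pos hp α).ne'
  simp only [id, e, rpow_neg hp.le, Pi.neg_apply]
  field_simp
  ring

theorem h_asymptotic_equiv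
    (c α : ℝ) (hc : 0 < c) (hα0 : 0 ≤ α) (hα1 : α < 1) :
    Tendsto
      (fun t : ℝ => (c / (1 + t) ^ α) *
        (Real.exp (∫ s in (0:ℝ)..t, c / (1 + s) ^ α) *
          ∫ s in Ioi t, Real.exp (-(∫ u in (0:ℝ)..s, c / (1 + u) ^ α))))
      atTop (nhds 1) := by
  have hδ : Tendsto (fun t : ℝ => 1 - α / c * (1 + t) ^ (α - 1)) atTop (nhds 1) := by
    have h := (tendsto_rpow_neg_atTop (y := 1 - α) (by linarith)).comp
      (tendsto_atTop_add_const_left atTop (1:ℝ) tendsto_id)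
    have := (h.const_mul (α / c)).const_sub 1
    simpa [Function.comp_def] using this
  have key : ∀ᶠ t : ℝ in atTop, 1 ≤ (c / (1 + t) ^ α) *
        (Real.exp (∫ s in (0:ℝ)..t, c / (1 + s) ^ α) *
          ∫ s in Ioi t, Real.exp (-(∫ u in (0:ℝ)..s, c / (1 + u) ^ α))) ∧
        (c / (1 + t) ^ α) *
        (Real.exp (∫ s in (0:ℝ)..t, c / (1 + s) ^ α) *
          ∫ s in Ioi t, Real.exp (-(∫ u in (0:ℝ)..s, c / (1 + u) ^ α)))
          ≤ (1 - α / c * (1 + t) ^ (α - 1))⁻¹ := by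
    filter_upwards [eventually_ge_atTop 0, hδ.eventually (lt_mem_nhds one_pos)] with t ht hd
    have hp : (0:ℝ) < 1 + t := by linarith
    rw [aux_G c α hα1 t ht, setIntegral_congr_fun (g := fun s =>
      exp (-(c / (1 - α) * ((1 + s) ^ (1 - α) - 1)))) measurableSet_Ioi (by
        intro s hs
        simp only
        rw [aux_G c α hα1 s (ht.trans (le_of_lt hs))])]
    set D := 1 - α / c * (1 + t) ^ (α - 1) with hD
    have hmono : ∀ s ∈ Ioi t, D ≤ 1 - α / c * (1 + s) ^ (α - 1) := by
      intro s hs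
      have hs' : t < s := hs
      have : (1 + s) ^ (α - 1) ≤ (1 + t) ^ (α - 1) :=
        rpow_le_rpow_of_nonpos hp (by linarith) (by linarith)
      have := mul_le_mul_of_nonneg_left this (div_nonneg hα0 hc.le)
      linarith
    have hle1 : ∀ s ∈ Ioi t, 1 - α / c * (1 + s) ^ (α - 1) ≤ 1 := by
      intro s hs
      have hs' : t < s := hs
      have : 0 ≤ (1 + s) ^ (α - 1) := rpow_nonneg (by linarith) _
      have : 0 ≤ α / c * (1 + s) ^ (α - 1) := by positivity
      linarith
    have hder := fun s (hs : s ∈ Ici t) => aux_dF c α hc hα1 s (ht.trans hs)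
    have hint := integrableOn_Ioi_deriv_of_nonneg' hder (fun s hs =>
      mul_nonneg (exp_pos _).le (hd.le.trans (hmono s hs))) (aux_F c α hc hα1)
    have hval := integral_Ioi_of_hasDerivAt_of_tendsto' hder hint (aux_F c α hc hα1)
    have hcont : ContinuousOn (fun s : ℝ => exp (-(c / (1 - α) * ((1 + s) ^ (1 - α) - 1))))
        (Ioi t) := by
      have : Continuous (fun s : ℝ => (1 + s) ^ (1 - α)) :=
        Continuous.rpow_const (by fun_prop) (fun _ => Or.inr (by linarith))
      exact Continuous.continuousOn (by fun_prop)
    have hintE : IntegrableOn (fun s : ℝ => exp (-(c / (1 - α) * ((1 + s) ^ (1 - α) - 1))))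
        (Ioi t) := by
      refine Integrable.mono' (hint.const_mul D⁻¹)
        (hcont.aestronglyMeasurable measurableSet_Ioi) ?_
      refine (ae_restrict_iff' measurableSet_Ioi).2 (Eventually.of_forall fun s hs => ?_)
      rw [norm_of_nonneg (exp_pos _).le, inv_mul_eq_div, le_div_iff₀ hd]
      exact mul_le_mul_of_nonneg_left (hmono s hs) (exp_pos _).le
    have hI1 := setIntegral_mono_on hint hintE measurableSet_Ioi (fun s hs =>
      mul_le_of_le_one_right (exp_pos _).le (hle1 s hs))
    have hI2 := setIntegral_mono_on (hintE.mul_const D) hint measurableSet_Ioi (fun s hs =>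
      mul_le_mul_of_nonneg_left (hmono s hs) (exp_pos _).le)
    rw [hval] at hI1 hI2
    rw [integral_mul_const] at hI2
    set I := ∫ s in Ioi t, exp (-(c / (1 - α) * ((1 + s) ^ (1 - α) - 1)))
    have hq := rpow_pos_of_pos hp α
    rw [exp_neg] at hI1 hI2
    set E := exp (c / (1 - α) * ((1 + t) ^ (1 - α) - 1)) with hE
    have hEp : 0 < E := exp_pos _
    have hm : 0 < c / (1 + t) ^ α * E := by positivity
    have hone : c / (1 + t) ^ α * E * (0 - -(E⁻¹ * (1 + t) ^ α / c)) = 1 := by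
      field_simp
      ring
    have a1 := mul_le_mul_of_nonneg_left hI1 hm.le
    have a2 := mul_le_mul_of_nonneg_left hI2 hm.le
    rw [hone] at a1 a2
    refine ⟨by linarith, ?_⟩
    rw [← one_div, le_div_iff₀ hd]
    linarith
  have hδ' := hδ.inv₀ one_ne_zero
  rw [inv_one] at hδ'
  exact tendsto_of_tendsto_of_tendsto_of_le_of_le' tendsto_const_nhds hδ'
    (key.mono fun _ h => h.1) (key.mono fun _ h => h.2)
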